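/- Let G be a finitely generated group with finite symmetric generating set S which is one-ended, i.e., for every r ∈ ℕ the complement of the ball B(r) has exactly one infinite connected component in the Cayley graph of (G, S). If f: G → ℝ belongs to H¹(G), i.e., f is bounded and ∑_{g ∈ G} ‖δf(g)‖ < ∞, then there exists a constant c ∈ ℝ such that f − c ∈ C₀(G). -/

import Mathlib

/-!
Along a self-avoiding path in the Cayley graph, the variation of `f` is at most the sum of
`delNorm S f` over the vertices of the path. Choose `r` so large that every finite set of vertices
outside the ball `B(r)` has `delNorm`-sum below `ε`; then `f` oscillates by less than `ε` on each
connected component of the complement of `B(r)` (`abs_sub_lt_of_reachable`).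

Truncating a geodesic word shows that each vertex outside `B(r)` is joined, outside `B(r)`, to the
finite sphere of radius `r + 1` (`exists_reachable_sphere`). Hence there are only finitely many
components, and as only one of them is infinite, it contains all but finitely many elements of `G`
(`finite_compl_component`). So `f` is Cauchy along the cofinite filter, and converges to some `c`.
-/

open Filter Topology
open scoped RealInnerProductSpace

noncomputable section

/-- The word length of `g` with respect to a generating set `S`
(`sInf` of lengths of words in `S` representing `g`). -/
def wordLength {G : Type*} [Group G] (S : Finset G) (g : G) : ℕ :=
  sInf {n | ∃ l : List G, l.length = n ∧ (∀ x ∈ l, x ∈ S) ∧ l.prod = g}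

/-- `S` is a finite symmetric generating set. -/
def IsSymmGen {G : Type*} [Group G] (S : Finset G) : Prop :=
  (∀ s ∈ S, s⁻¹ ∈ S) ∧ Subgroup.closure (S : Set G) = ⊤

/-- A Reiter sequence: probability measures `μ n` on `G` with `‖μ n - g ∗ μ n‖₁ → 0`
for every `g ∈ G`. -/
def IsReiterSeq {G : Type*} [Group G] (μ : ℕ → G → ℝ) : Prop :=
  (∀ n g, 0 ≤ μ n g) ∧ (∀ n, Summable (μ n)) ∧ (∀ n, ∑' g, μ n g = 1) ∧
    ∀ g : G, Tendsto (fun n => ∑' h, |μ n h - μ n (g⁻¹ * h)|) atTop (𝓝 0)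

/-- A 1-cocycle for the orthogonal representation `π`. -/
def IsCocycle {G H : Type*} [Group G] [NormedAddCommGroup H] [InnerProductSpace ℝ H]
    (π : G →* (H ≃ₗᵢ[ℝ] H)) (b : G → H) : Prop :=
  ∀ g h : G, b (g * h) = π g (b h) + b g

/-- An orthogonal representation is ergodic if its only invariant vector is `0`. -/
def IsErgodicRep {G H : Type*} [Group G] [NormedAddCommGroup H] [InnerProductSpace ℝ H]
    (π : G →* (H ≃ₗᵢ[ℝ] H)) : Prop :=
  ∀ ξ : H, (∀ g : G, π g ξ = ξ) → ξ = 0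

/-- The euclidean norm of the variation `δf(g) ∈ ℝ^S`, `δf(g)(s) = f(g) - f(gs)`. -/
def delNorm {G : Type*} [Group G] (S : Finset G) (f : G → ℝ) (g : G) : ℝ :=
  Real.sqrt (∑ s ∈ S, (f g - f (g * s)) ^ 2)

/-- A bounded function `f : G → ℝ` is higson if `g ↦ ‖δf(g)‖` tends to `0` as `g` leaves
finite subsets of `G`. -/
def IsHigson {G : Type*} [Group G] (S : Finset G) (f : G → ℝ) : Prop :=
  (∃ M : ℝ, ∀ g, |f g| ≤ M) ∧ Tendsto (delNorm S f) cofinite (𝓝 0)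

/-- The Cayley graph of `(G, S)`: `g` and `h` are adjacent iff `g ≠ h` and they differ by a
generator (for symmetric `S` this is `g⁻¹ h ∈ S`). -/
def cayleyGraph {G : Type*} [Group G] (S : Finset G) : SimpleGraph G :=
  SimpleGraph.fromRel fun g h => g⁻¹ * h ∈ S

/-- `(G, S)` is one-ended: for every `r`, the subgraph of the Cayley graph induced on the
complement of the ball `B(r)` has exactly one infinite connected component. -/
def OneEnded {G : Type*} [Group G] (S : Finset G) : Prop :=
  ∀ r : ℕ,
    ∃! c : ((cayleyGraph S).induce {g : G | r < wordLength S g}).ConnectedComponent,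
      c.supp.Infinite

/-! ### Word length -/

section WordLength

variable {G : Type*} [Group G] {S : Finset G}

lemma exists_word (hS : IsSymmGen S) (g : G) :
    ∃ l : List G, (∀ x ∈ l, x ∈ S) ∧ l.prod = g := by
  have hg : g ∈ Subgroup.closure (S : Set G) := by rw [hS.2]; trivial
  rw [← Subgroup.mem_toSubmonoid, Subgroup.closure_toSubmonoid] at hg
  obtain ⟨l, hl, hp⟩ := Submonoid.exists_list_of_mem_closure hg
  refine ⟨l, fun x hx => ?_, hp⟩
  rcases hl x hx with h | h
  · exact h
  · simpa using hS.1 _ h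

lemma wordLength_le {l : List G} (hl : ∀ x ∈ l, x ∈ S) : wordLength S l.prod ≤ l.length :=
  Nat.sInf_le ⟨l, rfl, hl, rfl⟩

lemma exists_geodesic (hS : IsSymmGen S) (g : G) :
    ∃ l : List G, l.length = wordLength S g ∧ (∀ x ∈ l, x ∈ S) ∧ l.prod = g := by
  obtain ⟨l, hl, hp⟩ := exists_word hS g
  exact Nat.sInf_mem (s := {n | ∃ l : List G, l.length = n ∧ (∀ x ∈ l, x ∈ S) ∧ l.prod = g})
    ⟨l.length, l, rfl, hl, hp⟩

lemma wordLength_mul_le (hS : IsSymmGen S) (h : G) {s : G} (hs : s ∈ S) :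
    wordLength S (h * s) ≤ wordLength S h + 1 := by
  obtain ⟨l, hlen, hl, rfl⟩ := exists_geodesic hS h
  have := wordLength_le (S := S) (l := l ++ [s]) (by
    intro x hx
    rcases List.mem_append.1 hx with hx | hx
    · exact hl x hx
    · rwa [List.mem_singleton.1 hx])
  simpa [hlen] using this

/-- Dropping the last letter of a geodesic word yields an element one step closer to `1`. -/
lemma exists_pred (hS : IsSymmGen S) {g : G} {n : ℕ} (hg : wordLength S g = n + 1) :
    ∃ h, ∃ s ∈ S, g = h * s ∧ wordLength S h = n := by
  obtain ⟨l, hlen, hl, hp⟩ := exists_geodesic hS g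
  rcases List.eq_nil_or_concat l with rfl | ⟨l', s, rfl⟩
  · simp [hg] at hlen
  · have hs : s ∈ S := hl s (by simp)
    have hgs : g = l'.prod * s := by rw [← hp]; simp
    refine ⟨l'.prod, s, hs, hgs, ?_⟩
    have h1 : wordLength S l'.prod ≤ l'.length :=
      wordLength_le fun x hx => hl x (by simp [hx])
    have h2 := wordLength_mul_le hS l'.prod hs
    rw [← hgs] at h2
    simp at hlen
    omega

lemma finite_sphere (hS : IsSymmGen S) (n : ℕ) : {g : G | wordLength S g = n}.Finite := by
  induction n with
  | zero =>
    refine (Set.finite_singleton (1 : G)).subset fun g hg => ?_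
    obtain ⟨l, hlen, -, rfl⟩ := exists_geodesic hS g
    rw [Set.mem_ofPred_eq.mp hg] at hlen
    rw [List.length_eq_zero_iff.1 hlen]
    simp
  | succ n ih =>
    refine (Set.Finite.image2 (fun h s : G => h * s) ih S.finite_toSet).subset fun g hg => ?_
    obtain ⟨h, s, hs, rfl, hh⟩ := exists_pred hS hg
    exact ⟨h, hh, s, hs, rfl⟩

lemma finite_ball (hS : IsSymmGen S) (r : ℕ) : {g : G | wordLength S g ≤ r}.Finite := by
  refine ((Set.finite_Iic r).biUnion fun n _ => finite_sphere hS n).subset fun g hg => ?_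
  exact Set.mem_biUnion (x := wordLength S g) hg rfl

end WordLength

/-! ### Components of the complement of a ball -/

section Components

variable {G : Type*} [Group G] {S : Finset G}

/-- The subgraph of the Cayley graph induced on the complement of the ball `B(r)`. -/
abbrev ballCompl (S : Finset G) (r : ℕ) : SimpleGraph {g : G | r < wordLength S g} :=
  (cayleyGraph S).induce {g : G | r < wordLength S g}

lemma exists_reachable_sphere (hS : IsSymmGen S) (r : ℕ) (k : ℕ) :
    ∀ g : {g : G | r < wordLength S g}, wordLength S g.1 = r + 1 + k →
      ∃ v : {g : G | r < wordLength S g}, wordLength S v.1 = r + 1 ∧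
        (ballCompl S r).Reachable g v := by
  induction k with
  | zero => exact fun g hg => ⟨g, hg, SimpleGraph.Reachable.refl g⟩
  | succ k ih =>
    rintro ⟨g, hgr⟩ hg
    obtain ⟨h, s, hs, rfl, hh⟩ := exists_pred hS (n := r + 1 + k) hg
    have hr : r < wordLength S h := by omega
    obtain ⟨v, hv, hreach⟩ := ih ⟨h, hr⟩ hh
    refine ⟨v, hv, SimpleGraph.Reachable.trans (SimpleGraph.Adj.reachable ?_) hreach⟩
    have hne : h * s ≠ h := by
      intro h0
      simp only [h0] at hg
      omega
    change (cayleyGraph S).Adj (h * s) h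
    rw [cayleyGraph, SimpleGraph.fromRel_adj]
    exact ⟨hne, Or.inr (by simpa using hs)⟩

/-- If `C` is the only infinite component of the complement of `B(r)`, then all but finitely many
group elements lie in `C`: the others lie in `B(r)` or in the finite component of one of the
finitely many vertices of the sphere of radius `r + 1`. -/
lemma finite_compl_component (hS : IsSymmGen S) (r : ℕ)
    (C : (ballCompl S r).ConnectedComponent)
    (huniq : ∀ D : (ballCompl S r).ConnectedComponent, D.supp.Infinite → D = C) :
    (Subtype.val '' C.supp)ᶜ.Finite := by
  have hsph : {v : {g : G | r < wordLength S g} | wordLength S v.1 = r + 1}.Finite :=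
    Set.Finite.preimage Subtype.val_injective.injOn (finite_sphere hS (r + 1))
  let T : Set (ballCompl S r).ConnectedComponent :=
    (ballCompl S r).connectedComponentMk '' {v | wordLength S v.1 = r + 1} \ {C}
  have hT : T.Finite := (hsph.image _).sdiff
  have hU : (⋃ D ∈ T, (Subtype.val '' D.supp : Set G)).Finite := by
    refine hT.biUnion fun D hD => Set.Finite.image _ ?_
    by_contra hinf
    exact hD.2 (huniq D hinf)
  refine ((finite_ball hS r).union hU).subset fun g hg => ?_
  by_cases hr : wordLength S g ≤ r
  · exact Or.inl hr
  · right
    push Not at hr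
    obtain ⟨v, hv, hreach⟩ := exists_reachable_sphere hS r (wordLength S g - (r + 1)) ⟨g, hr⟩
      (by change wordLength S g = _; omega)
    have heq := SimpleGraph.ConnectedComponent.sound hreach
    refine Set.mem_biUnion (x := (ballCompl S r).connectedComponentMk ⟨g, hr⟩)
      ⟨⟨v, hv, heq.symm⟩, fun h0 => hg ⟨⟨g, hr⟩, h0, rfl⟩⟩ ⟨⟨g, hr⟩, rfl, rfl⟩

end Components

/-! ### Variation along paths -/

section Variation

variable {G : Type*} [Group G] {S : Finset G}

lemma abs_sub_le_delNorm (f : G → ℝ) (g : G) {s : G} (hs : s ∈ S) :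
    |f g - f (g * s)| ≤ delNorm S f g := by
  refine Real.abs_le_sqrt ?_
  exact Finset.single_le_sum (f := fun s => (f g - f (g * s)) ^ 2) (fun _ _ => sq_nonneg _) hs

lemma abs_sub_le_of_adj (hS : IsSymmGen S) (f : G → ℝ) {g h : G}
    (hadj : (cayleyGraph S).Adj g h) : |f g - f h| ≤ delNorm S f g := by
  rw [cayleyGraph, SimpleGraph.fromRel_adj] at hadj
  have hs : g⁻¹ * h ∈ S := by
    rcases hadj.2 with h1 | h1
    · exact h1
    · simpa using hS.1 _ h1
  simpa using abs_sub_le_delNorm f g hs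

lemma abs_sub_le_walk (hS : IsSymmGen S) (f : G → ℝ) {r : ℕ} {u v : {g : G | r < wordLength S g}}
    (p : (ballCompl S r).Walk u v) :
    |f u.1 - f v.1| ≤ (p.support.map fun x => delNorm S f x.1).sum := by
  induction p with
  | nil => simp [delNorm, Real.sqrt_nonneg]
  | @cons u v w hadj p ih =>
    have h1 : |f u.1 - f v.1| ≤ delNorm S f u.1 := abs_sub_le_of_adj hS f hadj
    have h2 := abs_sub_le (f u.1) (f v.1) (f w.1)
    simp only [SimpleGraph.Walk.support_cons, List.map_cons, List.sum_cons]
    linarith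

/-- A path visits each vertex at most once, so a bound for the `delNorm`-sums over finite sets
outside `B(r)` bounds the oscillation of `f` on each component of the complement. -/
lemma abs_sub_lt_of_reachable (hS : IsSymmGen S) (f : G → ℝ) {r : ℕ} {ε : ℝ}
    (hε : ∀ t : Finset G, (∀ g ∈ t, r < wordLength S g) → ∑ g ∈ t, delNorm S f g < ε)
    {u v : {g : G | r < wordLength S g}} (huv : (ballCompl S r).Reachable u v) :
    |f u.1 - f v.1| < ε := by
  classical
  obtain ⟨p, hp⟩ := huv.exists_isPath
  refine (abs_sub_le_walk hS f p).trans_lt ?_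
  have h := hε (p.support.toFinset.map (Function.Embedding.subtype _)) (by
    intro g hg
    obtain ⟨x, -, rfl⟩ := Finset.mem_map.1 hg
    exact x.2)
  rw [Finset.sum_map, List.sum_toFinset _ hp.support_nodup] at h
  exact h

end Variation

/-- **`H¹` functions on one-ended groups are constant up to `C₀`.** If `G` is a one-ended
finitely generated group and `f : G → ℝ` is bounded with `∑ g, ‖δf(g)‖ < ∞`, then
`f ∈ C₀(G) + ℝ·1`. -/
theorem h1_const_mod_c0_of_oneEnded {G : Type*} [Group G] [Countable G]
    (S : Finset G) (hS : IsSymmGen S) (hone : OneEnded S)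
    (f : G → ℝ) (hbdd : ∃ M : ℝ, ∀ g, |f g| ≤ M)
    (hsum : Summable (delNorm S f)) :
    ∃ c : ℝ, Tendsto (fun g => f g - c) cofinite (𝓝 0) := by
  have hinf : Infinite G := by
    obtain ⟨C, hC, -⟩ := hone 0
    exact Set.infinite_univ_iff.1
      ((hC.image Subtype.val_injective.injOn).mono (Set.subset_univ _))
  have key : ∀ ε > 0, ∃ K : Set G, Kᶜ.Finite ∧ ∀ g ∈ K, ∀ h ∈ K, |f g - f h| < ε := by
    intro ε hε
    obtain ⟨F, hF⟩ := summable_iff_vanishing_norm.1 hsum ε hε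
    obtain ⟨C, -, huniq⟩ := hone (F.sup (wordLength S))
    refine ⟨Subtype.val '' C.supp, finite_compl_component hS _ C huniq, ?_⟩
    rintro _ ⟨u, hu, rfl⟩ _ ⟨v, hv, rfl⟩
    refine abs_sub_lt_of_reachable hS f (fun t ht => ?_)
      (SimpleGraph.ConnectedComponent.exact (hu.trans hv.symm))
    refine (le_abs_self _).trans_lt (hF t (Finset.disjoint_left.2 fun g hgt hgF => ?_))
    exact absurd (ht g hgt) (not_lt.2 (Finset.le_sup (f := wordLength S) hgF))
  have hcauchy : Cauchy (map f cofinite) := by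
    refine Metric.cauchy_iff.2 ⟨inferInstance, fun ε hε => ?_⟩
    obtain ⟨K, hK, hosc⟩ := key ε hε
    refine ⟨f '' K, image_mem_map (mem_cofinite.2 hK), ?_⟩
    rintro _ ⟨g, hg, rfl⟩ _ ⟨h, hh, rfl⟩
    exact hosc g hg h hh
  obtain ⟨c, hc⟩ := CompleteSpace.complete hcauchy
  refine ⟨c, ?_⟩
  have h := Tendsto.sub_const (show Tendsto f cofinite (𝓝 c) from hc) c
  rwa [sub_self] at h
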